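/- arXiv:2507.23468 — 2 statements merged into one kernel-verified Lean document; each statement's English description precedes it below -/
import Mathlib

section
/- For $m,n\in\mathbb N$ let $L_{m,n}(z,w)=\sum_{j=0}^{\min(m,n)}\frac{(-1)^j\,m!\,n!}{j!\,(m-j)!\,(n-j)!}\,z^{m-j}w^{n-j}$ denote the two-dimensional Laguerre polynomial. For all real numbers $s>1$, $t$ with $0\le t<s$, and $x\ge 0$, the double series $$\sum_{m\ge0}t^m\sum_{n\ge0}\frac1{s^n}\,\frac{e^{-x^2}}{m!\,n!}\,L_{m,n}(x,x)^2$$ converges (each inner series over $n$ converges, and so does the outer series over $m$) and equals $$\frac{s}{s-t}\,\exp\!\left(-(s-1)\,x^2\left(\frac1s-\frac{t(s-1)}{s(s-t)}\right)\right).$$ -/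
/-- The two-dimensional Laguerre polynomial
`L_{m,n}(z,w) = ∑_{j=0}^{min(m,n)} (-1)^j m! n! / (j! (m-j)! (n-j)!) z^(m-j) w^(n-j)`,
for real or complex arguments. In the range of the sum `j ≤ m` and `j ≤ n`, so the
natural-number subtractions are exact. -/
noncomputable def laguerre2D {𝕜 : Type*} [RCLike 𝕜] (m n : ℕ) (z w : 𝕜) : 𝕜 :=
  ∑ j ∈ Finset.range (min m n + 1),
    (-1 : 𝕜) ^ j * (m.factorial : 𝕜) * (n.factorial : 𝕜) /
        ((j.factorial : 𝕜) * ((m - j).factorial : 𝕜) * ((n - j).factorial : 𝕜)) *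
      z ^ (m - j) * w ^ (n - j)

/-!
The recurrences `L (m, n + 1) = w L (m, n) - m L (m - 1, n)` and
`L (m + 1, n) = z L (m, n) - n L (m, n - 1)` sum the inner series: for `v ≠ 0`, induction on `p`
gives `∑ₙ vⁿ / n! · L (m, n) (z, w) · L (p, n) (z', w') =`
`exp (v w w') (-v) ^ p L (m, p) (z - v w', w - z' / v)`.
For `p = m` and `v = 1 / s` only diagonal polynomials are left. These are Laguerre polynomials in
the product of the two arguments, and the outer series becomes their generating function
`∑ₘ rᵐ / m! · L (m, m) (z, w) = (1 + r)⁻¹ exp (r z w / (1 + r))` at `r = -t / s`.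
-/

open Finset NormedSpace
open scoped Nat

theorem hasSum_pow_div_factorial_mul_natCast_mul {𝕜 : Type*} [Field 𝕜] [CharZero 𝕜]
    [TopologicalSpace 𝕜] [IsTopologicalRing 𝕜] {v S : 𝕜} {a : ℕ → 𝕜}
    (h : HasSum (fun n => v ^ n / n ! * a (n + 1)) S) :
    HasSum (fun n => v ^ n / n ! * (n * a n)) (v * S) := by
  rw [← hasSum_nat_add_iff' 1]
  convert! h.mul_left v using 1
  · funext n
    have := Nat.cast_add_one_ne_zero (R := 𝕜) n
    push_cast [Nat.factorial_succ, pow_succ]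
    field_simp
  · simp

theorem hasSum_choose_mul_pow_mul_pow_div_factorial {𝕜 : Type*} [NormedField 𝕜] {u : 𝕜}
    (hu : ‖u‖ < 1) (x : 𝕜) (j : ℕ) :
    HasSum (fun i => (i + j).choose j * u ^ i * (x ^ j / j !))
      ((1 - u)⁻¹ * ((x / (1 - u)) ^ j / j !)) := by
  convert! (hasSum_choose_mul_geometric_of_norm_lt_one j hu).mul_right (x ^ j / j !) using 1
  rw [div_pow, pow_succ]
  field_simp

section RCLike

variable {𝕜 : Type*} [RCLike 𝕜]

theorem laguerre2D_comm (m n : ℕ) (z w : 𝕜) : laguerre2D m n z w = laguerre2D n m w z := by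
  simp only [laguerre2D, min_comm m n]
  refine sum_congr rfl fun j _ => ?_
  ring

theorem laguerre2D_eq_sum_antidiagonal (m n : ℕ) (z w : 𝕜) :
    laguerre2D m n z w = ∑ ij ∈ antidiagonal n,
      (n.choose ij.1 : 𝕜) * ((-1) ^ ij.1 * m.descFactorial ij.1 * z ^ (m - ij.1) * w ^ ij.2) := by
  rw [Nat.sum_antidiagonal_eq_sum_range_succ_mk, laguerre2D]
  refine sum_subset_zero_on_sdiff (range_mono (by lia)) (fun j hj => ?_) fun j hj => ?_
  · have hmj : m < j := by grind
    simp [Nat.descFactorial_of_lt hmj]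
  · have hjm : j ≤ m := by grind
    have hjn : j ≤ n := by grind
    rw [Nat.cast_choose 𝕜 hjn, ← Nat.factorial_mul_descFactorial hjm]
    have := Nat.cast_ne_zero (R := 𝕜).2 (m - j).factorial_ne_zero
    push_cast
    field_simp

theorem laguerre2D_zero_right (m : ℕ) (z w : 𝕜) : laguerre2D m 0 z w = z ^ m := by
  simp [laguerre2D_eq_sum_antidiagonal]

theorem laguerre2D_zero_left (n : ℕ) (z w : 𝕜) : laguerre2D 0 n z w = w ^ n := by
  rw [laguerre2D_comm, laguerre2D_zero_right]

/- The truncation of `m - 1` at `m = 0` is harmless, since the coefficient `m` vanishes there. -/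
theorem laguerre2D_succ_right (m n : ℕ) (z w : 𝕜) :
    laguerre2D m (n + 1) z w = w * laguerre2D m n z w - m * laguerre2D (m - 1) n z w := by
  have descFactorial_succ (i : ℕ) :
      (m.descFactorial (i + 1) : 𝕜) = m * (m - 1).descFactorial i := by
    cases m with
    | zero => simp
    | succ m => simp [Nat.succ_descFactorial_succ, -Nat.descFactorial_succ]
  simp only [laguerre2D_eq_sum_antidiagonal]
  rw [sum_antidiagonal_choose_succ_mul
      (fun i j => (-1 : 𝕜) ^ i * m.descFactorial i * z ^ (m - i) * w ^ j),
    sub_eq_add_neg, mul_sum, mul_sum, ← sum_neg_distrib]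
  congr 1 <;> refine sum_congr rfl fun ij hij => ?_
  · ring
  · rw [← Nat.choose_symm_of_eq_add (mem_antidiagonal.1 hij).symm, descFactorial_succ,
      Nat.sub_sub, Nat.add_comm 1]
    ring

theorem laguerre2D_succ_left (m n : ℕ) (z w : 𝕜) :
    laguerre2D (m + 1) n z w = z * laguerre2D m n z w - n * laguerre2D m (n - 1) z w := by
  simp only [laguerre2D_comm _ _ z w, laguerre2D_succ_right]

theorem hasSum_pow_div_factorial_mul_laguerre2D (v z w : 𝕜) (m : ℕ) :
    HasSum (fun n => v ^ n / n ! * laguerre2D m n z w) (exp (v * w) * (z - v) ^ m) := by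
  induction m with
  | zero =>
    simpa [laguerre2D_zero_left, mul_pow, div_mul_eq_mul_div] using
      expSeries_div_hasSum_exp (v * w)
  | succ m ih =>
    have shifted : HasSum (fun n => v ^ n / n ! * (n * laguerre2D m (n - 1) z w))
        (v * (exp (v * w) * (z - v) ^ m)) :=
      hasSum_pow_div_factorial_mul_natCast_mul ih
    convert! (ih.mul_left z).sub shifted using 1
    · funext n
      rw [laguerre2D_succ_left]
      ring
    · ring

theorem hasSum_pow_div_factorial_mul_laguerre2D_mul_laguerre2D {v : 𝕜} (hv : v ≠ 0)
    (z w z' w' : 𝕜) (m p : ℕ) :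
    HasSum (fun n => v ^ n / n ! * (laguerre2D m n z w * laguerre2D p n z' w'))
      (exp (v * (w * w')) * ((-v) ^ p * laguerre2D m p (z - v * w') (w - z' / v))) := by
  induction p generalizing m with
  | zero =>
    convert! hasSum_pow_div_factorial_mul_laguerre2D (v * w') z w m using 1
    · funext n
      rw [laguerre2D_zero_left]
      ring
    · rw [laguerre2D_zero_right, pow_zero, one_mul, mul_assoc v, mul_comm w]
  | succ p ih =>
    have shifted := hasSum_pow_div_factorial_mul_natCast_mul (v := v)
      (a := fun n => laguerre2D m n z w * laguerre2D p (n - 1) z' w')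
      (((ih m).mul_left w).sub ((ih (m - 1)).mul_left (m : 𝕜)) |>.congr_fun fun n => by
        rw [laguerre2D_succ_right, Nat.add_sub_cancel]
        ring)
    convert! ((ih m).mul_left z').sub shifted using 1
    · funext n
      rw [laguerre2D_succ_left]
      ring
    · rw [laguerre2D_succ_right]
      field_simp
      ring

theorem summable_prod_choose_mul_pow_mul_pow_div_factorial {u : 𝕜} (hu : ‖u‖ < 1) (x : 𝕜) :
    Summable fun ji : ℕ × ℕ => (ji.2 + ji.1).choose ji.1 * u ^ ji.2 * (x ^ ji.1 / ji.1 !) := by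
  have norm_rows (j : ℕ) := hasSum_choose_mul_pow_mul_pow_div_factorial
    (𝕜 := ℝ) (u := ‖u‖) (by rwa [norm_norm]) ‖x‖ j
  apply Summable.of_norm
  simp only [norm_mul, norm_div, norm_pow, RCLike.norm_natCast]
  rw [summable_prod_of_nonneg fun _ => by positivity]
  refine ⟨fun j => (norm_rows j).summable, ?_⟩
  simp only [(norm_rows _).tsum_eq]
  exact (Real.summable_pow_div_factorial _).mul_left _

theorem hasSum_prod_choose_mul_pow_mul_pow_div_factorial {u : 𝕜} (hu : ‖u‖ < 1) (x : 𝕜) :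
    HasSum (fun ji : ℕ × ℕ => (ji.2 + ji.1).choose ji.1 * u ^ ji.2 * (x ^ ji.1 / ji.1 !))
      ((1 - u)⁻¹ * exp (x / (1 - u))) := by
  have summable := summable_prod_choose_mul_pow_mul_pow_div_factorial hu x
  have sum_rows := summable.hasSum.prod_fiberwise
    (hasSum_choose_mul_pow_mul_pow_div_factorial hu x)
  rw [((expSeries_div_hasSum_exp (x / (1 - u))).mul_left (1 - u)⁻¹).unique sum_rows]
  exact summable.hasSum

theorem pow_div_factorial_mul_laguerre2D_self (r z w : 𝕜) (m : ℕ) :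
    r ^ m / m ! * laguerre2D m m z w = ∑ ji ∈ antidiagonal m,
      (ji.2 + ji.1).choose ji.1 * (-r) ^ ji.2 * ((r * (z * w)) ^ ji.1 / ji.1 !) := by
  rw [laguerre2D_eq_sum_antidiagonal, ← Nat.sum_antidiagonal_swap, mul_sum]
  refine sum_congr rfl fun ⟨j, i⟩ hji => ?_
  obtain rfl := mem_antidiagonal.1 hji
  have factorial_eq : ((j + i)! : 𝕜) = j ! * (j + i).descFactorial i := by
    rw [← Nat.factorial_mul_descFactorial (Nat.le_add_left i j), Nat.add_sub_cancel, Nat.cast_mul]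
  have := Nat.cast_ne_zero (R := 𝕜).2 (j + i).factorial_ne_zero
  have := Nat.cast_ne_zero (R := 𝕜).2 j.factorial_ne_zero
  simp only [Prod.swap, Nat.add_sub_cancel, Nat.add_comm i j]
  field_simp
  rw [factorial_eq, Nat.choose_symm_add]
  ring

theorem hasSum_pow_div_factorial_mul_laguerre2D_self {r : 𝕜} (hr : ‖r‖ < 1) (z w : 𝕜) :
    HasSum (fun m => r ^ m / m ! * laguerre2D m m z w)
      ((1 + r)⁻¹ * exp (r * (z * w) / (1 + r))) := by
  have total := hasSum_prod_choose_mul_pow_mul_pow_div_factorial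
    (u := -r) (by rwa [norm_neg]) (r * (z * w))
  rw [sub_neg_eq_add, ← HasAntidiagonal.sigmaAntidiagonalEquivProd.hasSum_iff] at total
  refine (total.sigma fun m => hasSum_fintype _).congr_fun fun m => ?_
  rw [pow_div_factorial_mul_laguerre2D_self, ← sum_coe_sort]
  rfl

end RCLike

/- The squared modulus of a matrix element of the displacement operator is the case
`w = z' = conj z`, `w' = z`, in which `laguerre2D m n z' w'` is the conjugate of
`laguerre2D m n z w`. -/
theorem laguerre2D_double_series_general {𝕜 : Type*} [RCLike 𝕜] {s t : 𝕜} (hts : ‖t‖ < ‖s‖)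
    (z w z' w' : 𝕜) :
    (∀ m : ℕ, Summable fun n : ℕ =>
      (s ^ n)⁻¹ * (exp (-(w * w')) / (m ! * n !) *
        (laguerre2D m n z w * laguerre2D m n z' w'))) ∧
    HasSum
      (fun m : ℕ => t ^ m * ∑' n : ℕ,
        (s ^ n)⁻¹ * (exp (-(w * w')) / (m ! * n !) *
          (laguerre2D m n z w * laguerre2D m n z' w')))
      (s / (s - t) *
        exp (-(s - 1) * (w * w') / s + t * ((s * z - w') * (s * z' - w)) / (s * (s - t)))) := by
  have hs : s ≠ 0 := norm_pos_iff.1 ((norm_nonneg t).trans_lt hts)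
  have hst : s - t ≠ 0 := sub_ne_zero.2 fun h => hts.ne (congrArg norm h.symm)
  have inner (m : ℕ) : HasSum (fun n : ℕ => (s ^ n)⁻¹ * (exp (-(w * w')) / (m ! * n !) *
        (laguerre2D m n z w * laguerre2D m n z' w')))
      (exp (-(w * w')) * exp (s⁻¹ * (w * w')) *
        ((-s⁻¹) ^ m / m ! * laguerre2D m m (z - s⁻¹ * w') (w - z' / s⁻¹))) := by
    convert! (hasSum_pow_div_factorial_mul_laguerre2D_mul_laguerre2D (inv_ne_zero hs)
      z w z' w' m m).mul_left (exp (-(w * w')) / m !) using 1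
    · funext n
      ring
    · ring
  refine ⟨fun m => (inner m).summable, ?_⟩
  simp only [(inner _).tsum_eq]
  have ratio_lt_one : ‖-t / s‖ < 1 := by
    rwa [norm_div, norm_neg, div_lt_one (norm_pos_iff.2 hs)]
  convert! (hasSum_pow_div_factorial_mul_laguerre2D_self ratio_lt_one
    (z - s⁻¹ * w') (w - z' / s⁻¹)).mul_left (exp (-(w * w')) * exp (s⁻¹ * (w * w'))) using 1
  · funext m
    ring
  · have one_add_ratio : 1 + -t / s = (s - t) / s := by
      field_simp
      ring
    rw [one_add_ratio, inv_div, mul_left_comm (exp _ * exp _), ← exp_add, ← exp_add]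
    congr 2
    field_simp
    ring

theorem laguerre2D_double_series (s t x : ℝ) (hs : 1 < s) (ht0 : 0 ≤ t) (hts : t < s)
    (hx : 0 ≤ x) :
    (∀ m : ℕ, Summable fun n : ℕ =>
      (s ^ n)⁻¹ * (Real.exp (-x ^ 2) / ((m.factorial : ℝ) * (n.factorial : ℝ)) *
        laguerre2D m n x x ^ 2)) ∧
    HasSum
      (fun m : ℕ => t ^ m * ∑' n : ℕ,
        (s ^ n)⁻¹ * (Real.exp (-x ^ 2) / ((m.factorial : ℝ) * (n.factorial : ℝ)) *
          laguerre2D m n x x ^ 2))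
      (s / (s - t) *
        Real.exp (-(s - 1) * x ^ 2 * (1 / s - t * (s - 1) / (s * (s - t))))) := by
  have hts' : ‖t‖ < ‖s‖ := by rwa [Real.norm_of_nonneg ht0, Real.norm_of_nonneg (ht0.trans hts.le)]
  have exponent_eq : -(s - 1) * x ^ 2 * (1 / s - t * (s - 1) / (s * (s - t))) =
      -(s - 1) * (x * x) / s + t * ((s * x - x) * (s * x - x)) / (s * (s - t)) := by ring
  rw [exponent_eq]
  simpa only [Real.exp_eq_exp_ℝ, sq] using
    laguerre2D_double_series_general hts' x x x x
end

section
/- (Lax pair for the complex Calogero–Moser system.) Let $\omega\in\mathbb{C}$, $r\ge 1$, let $I\subseteq\mathbb{R}$ be an open interval, and let $\lambda_1,\dots,\lambda_r : I\to\mathbb{C}$ be twice differentiable functions that are pairwise distinct at every $t\in I$. Define the $r\times r$ complex matrix-valued functions $L(t)$ and $M(t)$ by $$L_{jk}(t) = (\lambda_j'(t)+i\omega\lambda_j(t))\,\delta_{jk} + i\,(1-\delta_{jk})\frac{1}{\lambda_j(t)-\lambda_k(t)},$$ $$M_{jk}(t) = \delta_{jk}\sum_{l\ne j}\frac{1}{(\lambda_j(t)-\lambda_l(t))^2}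 - (1-\delta_{jk})\frac{1}{(\lambda_j(t)-\lambda_k(t))^2}.$$ Then the equations of motion $$\lambda_k''(t)+\omega^2\lambda_k(t)=\sum_{m\ne k}\frac{2}{(\lambda_k(t)-\lambda_m(t))^3}\qquad (1\le k\le r,\ t\in I)$$ hold if and only if $L$ is differentiable on $I$ and $L'(t)+i[M(t),L(t)]-i\omega L(t)=0$ for every $t\in I$, where $[\cdot,\cdot]$ is the matrix commutator. -/
noncomputable section

/-- The equations of motion of the complex Calogero–Moser system with frequency `ω` on the
set of times `I`. -/
def CalogeroMoserEq {r : ℕ} (ω : ℂ) (I : Set ℝ) (lam : Fin r → ℝ → ℂ) : Prop :=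
  ∀ k : Fin r, ∀ t ∈ I,
    deriv (deriv (lam k)) t + ω ^ 2 * lam k t =
      ∑ m ∈ Finset.univ.erase k, 2 / (lam k t - lam m t) ^ 3

/-- `L_{jk} = (λ_j' + iω λ_j) δ_{jk} + i (1 - δ_{jk}) / (λ_j - λ_k)`. -/
def laxL {r : ℕ} (ω : ℂ) (lam : Fin r → ℝ → ℂ) (t : ℝ) : Matrix (Fin r) (Fin r) ℂ :=
  Matrix.of fun j k =>
    if j = k then deriv (lam j) t + Complex.I * ω * lam j t
    else Complex.I / (lam j t - lam k t)

/-- `M_{jk} = δ_{jk} ∑_{l ≠ j} 1 / (λ_j - λ_l)² - (1 - δ_{jk}) / (λ_j - λ_k)²`. -/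
def laxM {r : ℕ} (lam : Fin r → ℝ → ℂ) (t : ℝ) : Matrix (Fin r) (Fin r) ℂ :=
  Matrix.of fun j k =>
    if j = k then ∑ l ∈ Finset.univ.erase j, 1 / (lam j t - lam l t) ^ 2
    else -(1 / (lam j t - lam k t) ^ 2)

/-- The modified Lax equation `L' + i [M, L] - iω L = 0` on the set of times `I`;
differentiability of `L` on `I` is part of the assertion. -/
def ModifiedLaxEq {r : ℕ} (ω : ℂ) (I : Set ℝ) (L M : ℝ → Matrix (Fin r) (Fin r) ℂ) : Prop :=
  ∀ t ∈ I, ∃ L' : Matrix (Fin r) (Fin r) ℂ, HasDerivAt L L' t ∧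
    L' + Complex.I • (M t * L t - L t * M t) - (Complex.I * ω) • L t = 0

end

/-!
Write `L = diag p + i X` with `X_{jk} = 1 / (λ_j - λ_k)` and `p_j = λ_j' + iω λ_j`. The addition
formula `X_{jl} X_{lk} = X_{jk} (X_{jl} + X_{lk})` makes the off-diagonal entries of `[M, X]`
cancel, leaving `[M, X] = diag (2 ∑_l X_{jl}³)`, the force. On the other hand
`[M, diag p]_{jk} = (p_j - p_k) X_{jk}²` compensates the off-diagonal entries of `L' - iω L`. So the
left-hand side of the Lax equation is the diagonal matrix of the defects in the equations of motion.
-/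

open Matrix

section InvDiff

variable {ι K : Type*} [Field K]

/-- The matrix `1 / (x_j - x_k)` of inverse differences of a family of points, the off-diagonal part
of the Lax matrix. Its diagonal vanishes because `0⁻¹ = 0`. -/
def invDiff (x : ι → K) : Matrix ι ι K :=
  of fun j k => (x j - x k)⁻¹

theorem invDiff_apply (x : ι → K) (j k : ι) : invDiff x j k = (x j - x k)⁻¹ :=
  rfl

@[simp]
theorem invDiff_apply_self (x : ι → K) (j : ι) : invDiff x j j = 0 := by
  simp [invDiff_apply]

theorem invDiff_swap (x : ι → K) (j k : ι) : invDiff x k j = -invDiff x j k := by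
  rw [invDiff_apply, invDiff_apply, ← inv_neg, neg_sub]

theorem invDiff_mul_invDiff {x : ι → K} {j l k : ι}
    (hjl : x j ≠ x l) (hlk : x l ≠ x k) (hjk : x j ≠ x k) :
    invDiff x j l * invDiff x l k = invDiff x j k * (invDiff x j l + invDiff x l k) := by
  have hjl' := sub_ne_zero.2 hjl
  have hlk' := sub_ne_zero.2 hlk
  have hjk' := sub_ne_zero.2 hjk
  simp only [invDiff_apply]
  field_simp
  ring

variable [Fintype ι] [DecidableEq ι]

attribute [local instance] LieRing.ofAssociativeRing

/-- The second Calogero–Moser Lax matrix: the Laplacian of the complete graph on `ι` whose edge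
between `j` and `k` has weight `1 / (x_j - x_k)²`. -/
def invSqDiffLaplacian (x : ι → K) : Matrix ι ι K :=
  diagonal (fun j => ∑ l, invDiff x j l ^ 2) - (invDiff x).map (· ^ 2)

theorem lie_invSqDiffLaplacian_diagonal_apply (x p : ι → K) (j k : ι) :
    ⁅invSqDiffLaplacian x, diagonal p⁆ j k = (p j - p k) * invDiff x j k ^ 2 := by
  rw [invSqDiffLaplacian, sub_lie, (commute_diagonal _ p).lie_eq, zero_sub, Matrix.neg_apply,
    Ring.lie_def, Matrix.sub_apply, mul_diagonal, diagonal_mul, map_apply]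
  ring

theorem lie_invSqDiffLaplacian_invDiff_apply (x : ι → K) (j k : ι) :
    ⁅invSqDiffLaplacian x, invDiff x⁆ j k =
      ∑ l, (invDiff x j k * (invDiff x j l ^ 2 - invDiff x k l ^ 2) +
        invDiff x j l * invDiff x l k * (invDiff x l k - invDiff x j l)) := by
  rw [invSqDiffLaplacian, sub_lie, Ring.lie_def, Ring.lie_def, Matrix.sub_apply, Matrix.sub_apply,
    Matrix.sub_apply, diagonal_mul, mul_diagonal, mul_apply, mul_apply, mul_comm _ (invDiff x j k),
    ← mul_sub, ← Finset.sum_sub_distrib, ← Finset.sum_sub_distrib, Finset.mul_sum,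
    ← Finset.sum_sub_distrib]
  refine Finset.sum_congr rfl fun l _ => ?_
  rw [map_apply, map_apply]
  ring

theorem lie_invSqDiffLaplacian_invDiff {x : ι → K} (hx : x.Injective) :
    ⁅invSqDiffLaplacian x, invDiff x⁆ = diagonal fun j => ∑ l, 2 * invDiff x j l ^ 3 := by
  ext j k
  rw [lie_invSqDiffLaplacian_invDiff_apply]
  obtain rfl | hjk := eq_or_ne j k
  · rw [diagonal_apply_eq]
    refine Finset.sum_congr rfl fun l _ => ?_
    rw [invDiff_swap x j l]
    ring
  · rw [diagonal_apply_ne _ hjk, Fintype.sum_eq_add j k hjk]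
    · simp only [invDiff_apply_self, invDiff_swap x j k]
      ring
    · rintro l ⟨hlj, hlk⟩
      rw [invDiff_mul_invDiff (hx.ne hlj.symm) (hx.ne hlk) (hx.ne hjk), invDiff_swap x l k]
      ring

theorem lie_invSqDiffLaplacian_diagonal_add_smul {x : ι → K} (hx : x.Injective) (p : ι → K)
    (c : K) :
    ⁅invSqDiffLaplacian x, diagonal p + c • invDiff x⁆ =
      (of fun j k => (p j - p k) * invDiff x j k ^ 2) +
        c • diagonal fun j => ∑ l, 2 * invDiff x j l ^ 3 := by
  rw [lie_add, lie_smul, lie_invSqDiffLaplacian_invDiff hx]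
  congr 1
  ext j k
  rw [lie_invSqDiffLaplacian_diagonal_apply, of_apply]

end InvDiff

section Deriv

variable {ι κ 𝕜 F : Type*} [NontriviallyNormedField 𝕜]

theorem hasDerivAt_matrix [Finite κ] [NormedAddCommGroup F] [NormedSpace 𝕜 F] {A : 𝕜 → Matrix ι κ F}
    {A' : Matrix ι κ F} {t : 𝕜} :
    HasDerivAt A A' t ↔ ∀ j k, HasDerivAt (fun s => A s j k) (A' j k) t :=
  have := Fintype.ofFinite κ
  (hasDerivAt_pi (E' := fun _ => κ → F)).trans (forall_congr' fun _ => hasDerivAt_pi)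

theorem hasDerivAt_diagonal_apply [DecidableEq κ] [NormedAddCommGroup F] [NormedSpace 𝕜 F]
    {p : 𝕜 → κ → F} {p' : κ → F} {t : 𝕜} (hp : HasDerivAt p p' t) (j k : κ) :
    HasDerivAt (fun s => diagonal (p s) j k) (diagonal p' j k) t := by
  obtain rfl | hjk := eq_or_ne j k
  · simpa only [diagonal_apply_eq] using hasDerivAt_pi.1 hp j
  · simpa only [diagonal_apply_ne _ hjk] using hasDerivAt_const t (0 : F)

variable [NontriviallyNormedField F] [NormedAlgebra 𝕜 F] {x : 𝕜 → κ → F} {v : κ → F} {t : 𝕜}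

theorem hasDerivAt_invDiff_apply (hx : HasDerivAt x v t) (hinj : (x t).Injective) (j k : κ) :
    HasDerivAt (fun s => invDiff (x s) j k) (-(v j - v k) * invDiff (x t) j k ^ 2) t := by
  obtain rfl | hjk := eq_or_ne j k
  · simpa only [invDiff_apply_self, sub_self, neg_zero, zero_mul] using hasDerivAt_const t (0 : F)
  · have hsub : HasDerivAt (fun s => x s j - x s k) (v j - v k) t :=
      (hasDerivAt_pi.1 hx j).fun_sub (hasDerivAt_pi.1 hx k)
    simpa only [invDiff_apply, inv_pow, div_eq_mul_inv] using
      hsub.fun_inv (sub_ne_zero.2 (hinj.ne hjk))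

theorem hasDerivAt_diagonal_add_smul_invDiff [Finite κ] [DecidableEq κ] {p : 𝕜 → κ → F} {p' : κ → F}
    (hp : HasDerivAt p p' t) (hx : HasDerivAt x v t) (hinj : (x t).Injective) (c : F) :
    HasDerivAt (fun s => diagonal (p s) + c • invDiff (x s))
      (diagonal p' + c • of fun j k => -(v j - v k) * invDiff (x t) j k ^ 2) t :=
  hasDerivAt_matrix.2 fun j k =>
    (hasDerivAt_diagonal_apply hp j k).fun_add ((hasDerivAt_invDiff_apply hx hinj j k).const_mul c)

end Deriv

section CalogeroMoser

variable {r : ℕ} (ω : ℂ) {lam : Fin r → ℝ → ℂ} {t : ℝ}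

theorem laxL_eq (lam : Fin r → ℝ → ℂ) (t : ℝ) :
    laxL ω lam t = diagonal (fun k => deriv (lam k) t + Complex.I * ω * lam k t) +
      Complex.I • invDiff fun k => lam k t := by
  ext j k
  obtain rfl | hjk := eq_or_ne j k
  · simp [laxL]
  · simp [laxL, hjk, invDiff_apply, div_eq_mul_inv]

theorem laxM_eq (lam : Fin r → ℝ → ℂ) (t : ℝ) :
    laxM lam t = invSqDiffLaplacian fun k => lam k t := by
  ext j k
  obtain rfl | hjk := eq_or_ne j k
  · simp [laxM, invSqDiffLaplacian, invDiff_apply]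
  · simp [laxM, invSqDiffLaplacian, invDiff_apply, hjk]

/-- The formal time derivative of the Lax matrix `laxL`; it is the actual derivative at times when
the particles are distinct and twice differentiable. -/
noncomputable def laxLDeriv (ω : ℂ) (lam : Fin r → ℝ → ℂ) (t : ℝ) : Matrix (Fin r) (Fin r) ℂ :=
  diagonal (fun k => deriv (deriv (lam k)) t + Complex.I * ω * deriv (lam k) t) +
    Complex.I • of fun j k =>
      -(deriv (lam j) t - deriv (lam k) t) * invDiff (fun l => lam l t) j k ^ 2

theorem hasDerivAt_laxL (h1 : ∀ k, DifferentiableAt ℝ (lam k) t)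
    (h2 : ∀ k, DifferentiableAt ℝ (deriv (lam k)) t) (hinj : Function.Injective fun k => lam k t) :
    HasDerivAt (laxL ω lam) (laxLDeriv ω lam t) t := by
  have hlam : HasDerivAt (fun s k => lam k s) (fun k => deriv (lam k) t) t :=
    hasDerivAt_pi.2 fun k => (h1 k).hasDerivAt
  have hp : HasDerivAt (fun s k => deriv (lam k) s + Complex.I * ω * lam k s)
      (fun k => deriv (deriv (lam k)) t + Complex.I * ω * deriv (lam k) t) t :=
    hasDerivAt_pi.2 fun k => (h2 k).hasDerivAt.fun_add ((h1 k).hasDerivAt.const_mul _)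
  rw [funext (laxL_eq ω lam)]
  exact hasDerivAt_diagonal_add_smul_invDiff hp hlam hinj Complex.I

/-- How far `lam` is at time `t` from satisfying the equation of motion of the `k`-th particle. -/
noncomputable def calogeroMoserDefect (ω : ℂ) (lam : Fin r → ℝ → ℂ) (t : ℝ) (k : Fin r) : ℂ :=
  deriv (deriv (lam k)) t + ω ^ 2 * lam k t -
    ∑ m ∈ Finset.univ.erase k, 2 / (lam k t - lam m t) ^ 3

theorem calogeroMoserEq_iff_defect_eq_zero {I : Set ℝ} :
    CalogeroMoserEq ω I lam ↔ ∀ t ∈ I, calogeroMoserDefect ω lam t = 0 := by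
  simp only [CalogeroMoserEq, funext_iff, calogeroMoserDefect, Pi.zero_apply, sub_eq_zero]
  exact ⟨fun h t ht k => h k t ht, fun h k t ht => h t ht k⟩

theorem modifiedLaxEq_iff_of_hasDerivAt {I : Set ℝ} {L L' M : ℝ → Matrix (Fin r) (Fin r) ℂ}
    (hL : ∀ t ∈ I, HasDerivAt L (L' t) t) :
    ModifiedLaxEq ω I L M ↔
      ∀ t ∈ I, L' t + Complex.I • ⁅M t, L t⁆ - (Complex.I * ω) • L t = 0 := by
  refine forall₂_congr fun t ht => ⟨?_, fun h => ⟨L' t, hL t ht, h⟩⟩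
  rintro ⟨A, hA, h⟩
  have hA_eq : A = L' t := by
    ext j k
    exact (hasDerivAt_matrix.1 hA j k).unique (hasDerivAt_matrix.1 (hL t ht) j k)
  rwa [hA_eq] at h

theorem lie_laxM_laxL (hinj : Function.Injective fun k => lam k t) :
    ⁅laxM lam t, laxL ω lam t⁆ =
      (of fun j k => (deriv (lam j) t + Complex.I * ω * lam j t -
        (deriv (lam k) t + Complex.I * ω * lam k t)) * invDiff (fun l => lam l t) j k ^ 2) +
      Complex.I • diagonal fun j => ∑ m ∈ Finset.univ.erase j, 2 / (lam j t - lam m t) ^ 3 := by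
  rw [laxM_eq, laxL_eq, lie_invSqDiffLaplacian_diagonal_add_smul hinj]
  congr 3
  ext j
  rw [Finset.sum_erase _ (by simp)]
  simp only [invDiff_apply, inv_pow, div_eq_mul_inv]

theorem laxLDeriv_add_lie_sub_eq_diagonal_defect (hinj : Function.Injective fun k => lam k t) :
    laxLDeriv ω lam t + Complex.I • ⁅laxM lam t, laxL ω lam t⁆ - (Complex.I * ω) • laxL ω lam t =
      diagonal (calogeroMoserDefect ω lam t) := by
  rw [lie_laxM_laxL ω hinj, laxL_eq, laxLDeriv]
  ext j k
  simp only [Matrix.sub_apply, Matrix.add_apply, Matrix.smul_apply, of_apply, smul_eq_mul]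
  obtain rfl | hjk := eq_or_ne j k
  · simp only [diagonal_apply_eq, invDiff_apply_self, calogeroMoserDefect]
    linear_combination (∑ m ∈ Finset.univ.erase j, 2 / (lam j t - lam m t) ^ 3 -
      ω ^ 2 * lam j t) * Complex.I_sq
  · have hcancel : (lam j t - lam k t) * invDiff (fun l => lam l t) j k = 1 :=
      mul_inv_cancel₀ (sub_ne_zero.2 (hinj.ne hjk))
    simp only [diagonal_apply_ne _ hjk]
    linear_combination Complex.I ^ 2 * ω * invDiff (fun l => lam l t) j k * hcancel

theorem lax_pair_calogero_moser_general {I : Set ℝ}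
    (hlam1 : ∀ k : Fin r, ∀ t ∈ I, DifferentiableAt ℝ (lam k) t)
    (hlam2 : ∀ k : Fin r, ∀ t ∈ I, DifferentiableAt ℝ (deriv (lam k)) t)
    (hdist : ∀ t ∈ I, ∀ j k : Fin r, j ≠ k → lam j t ≠ lam k t) :
    CalogeroMoserEq ω I lam ↔ ModifiedLaxEq ω I (laxL ω lam) (laxM lam) := by
  have hinj : ∀ t ∈ I, Function.Injective fun k => lam k t := fun t ht j k =>
    not_imp_not.1 (hdist t ht j k)
  have hL : ∀ t ∈ I, HasDerivAt (laxL ω lam) (laxLDeriv ω lam t) t := fun t ht =>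
    hasDerivAt_laxL ω (fun k => hlam1 k t ht) (fun k => hlam2 k t ht) (hinj t ht)
  rw [calogeroMoserEq_iff_defect_eq_zero, modifiedLaxEq_iff_of_hasDerivAt ω hL]
  refine forall₂_congr fun t ht => ?_
  rw [laxLDeriv_add_lie_sub_eq_diagonal_defect ω (hinj t ht), diagonal_eq_zero]

end CalogeroMoser

theorem lax_pair_calogero_moser (ω : ℂ) (r : ℕ) (hr : 1 ≤ r)
    (I : Set ℝ) (hIopen : IsOpen I) (hIconn : I.OrdConnected)
    (lam : Fin r → ℝ → ℂ)
    (hlam1 : ∀ k : Fin r, ∀ t ∈ I, DifferentiableAt ℝ (lam k) t)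
    (hlam2 : ∀ k : Fin r, ∀ t ∈ I, DifferentiableAt ℝ (deriv (lam k)) t)
    (hdist : ∀ t ∈ I, ∀ j k : Fin r, j ≠ k → lam j t ≠ lam k t) :
    CalogeroMoserEq ω I lam ↔ ModifiedLaxEq ω I (laxL ω lam) (laxM lam) :=
  lax_pair_calogero_moser_general ω hlam1 hlam2 hdist
end
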